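/- arXiv:1808.01268 — 3 statements merged into one kernel-verified Lean document; each statement's English description precedes it below -/
import Mathlib

section
/- Every reflection factorization of a Coxeter element of G4 of length at least three has, in its Hurwitz orbit, a reflection factorization with two consecutive equal entries. -/
noncomputable section

open Matrix Complex

/-- The `i`-th Hurwitz move on length-`k` tuples of group elements. -/
def IsHurwitzMove {G : Type*} [Group G] {k : ℕ} (t t' : Fin k → G) : Prop :=
  ∃ i : ℕ, ∃ h : i + 1 < k,
    t' ⟨i, Nat.lt_of_succ_lt h⟩ = t ⟨i + 1, h⟩ ∧
    t' ⟨i + 1, h⟩ = (t ⟨i + 1, h⟩)⁻¹ * t ⟨i, Nat.lt_of_succ_lt h⟩ * t ⟨i + 1, h⟩ ∧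
    ∀ j : Fin k, (j : ℕ) ≠ i → (j : ℕ) ≠ i + 1 → t' j = t j

/-- Two tuples lie in the same Hurwitz orbit. -/
def SameHurwitzOrbit {G : Type*} [Group G] {k : ℕ} (t t' : Fin k → G) : Prop :=
  Relation.EqvGen IsHurwitzMove t t'

/-- A group element `r` appears (as an entry) in the Hurwitz orbit of the tuple `t`. -/
def Appears {G : Type*} [Group G] {k : ℕ} (r : G) (t : Fin k → G) : Prop :=
  ∃ s : Fin k → G, SameHurwitzOrbit t s ∧ ∃ j, s j = r

/-- A tuple has two consecutive equal entries. -/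
def HasConsecutiveEqualPair {G : Type*} [Group G] {k : ℕ} (t : Fin k → G) : Prop :=
  ∃ i : ℕ, ∃ h : i + 1 < k, t ⟨i, Nat.lt_of_succ_lt h⟩ = t ⟨i + 1, h⟩

/-- Replace the `p`-th entry of a tuple by two consecutive copies of its square. -/
def doubleAt {G : Type*} [Group G] {m : ℕ} (t : Fin m → G) (p : Fin m) : Fin (m + 1) → G :=
  fun j =>
    if h1 : (j : ℕ) < (p : ℕ) then t ⟨j, h1.trans p.isLt⟩
    else if h2 : (j : ℕ) ≤ (p : ℕ) + 1 then (t p) ^ 2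
    else t ⟨(j : ℕ) - 1, by have := j.isLt; omega⟩

/-- `ω = e^(2πi/3)`. -/
def ω : ℂ := Complex.exp (2 * Real.pi * Complex.I / 3)

def AMat : Matrix (Fin 2) (Fin 2) ℂ := !![1, 0; 0, ω]

def BMat : Matrix (Fin 2) (Fin 2) ℂ :=
  !![(ω - ω ^ 2) / 3, ω ^ 2; (-2 * ω ^ 2) / 3, (-ω - 2 * ω ^ 2) / 3]

/-- The complex reflection group G₄ as the subgroup of GL(2,ℂ) generated by `AMat`, `BMat`. -/
def G4 : Subgroup (GL (Fin 2) ℂ) :=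
  Subgroup.closure {g : GL (Fin 2) ℂ |
    (g : Matrix (Fin 2) (Fin 2) ℂ) = AMat ∨ (g : Matrix (Fin 2) (Fin 2) ℂ) = BMat}

/-- The matrix underlying an element of G₄. -/
def mat (t : G4) : Matrix (Fin 2) (Fin 2) ℂ := ((t : GL (Fin 2) ℂ) : Matrix (Fin 2) (Fin 2) ℂ)

/-- A reflection in G₄: a non-identity element with eigenvalue 1. -/
def IsReflection (t : G4) : Prop := t ≠ 1 ∧ (mat t - 1).det = 0

/-- The conjugacy class R₁ of reflections of determinant ω. -/
def R1 : Set G4 := {t | IsReflection t ∧ (mat t).det = ω}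

/-- The conjugacy class R₂ of reflections of determinant ω². -/
def R2 : Set G4 := {t | IsReflection t ∧ (mat t).det = ω ^ 2}

/-- A Coxeter element of G₄: an element with a primitive 6th root of unity as eigenvalue. -/
def IsCoxeter (c : G4) : Prop :=
  ∃ ζ : ℂ, IsPrimitiveRoot ζ 6 ∧ (mat c - ζ • (1 : Matrix (Fin 2) (Fin 2) ℂ)).det = 0

/-- The relators of G₅: a³, b³, abab(baba)⁻¹. -/
def g5Rels : Set (FreeGroup (Fin 2)) :=
  {FreeGroup.of 0 ^ 3, FreeGroup.of 1 ^ 3,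
    FreeGroup.of 0 * FreeGroup.of 1 * FreeGroup.of 0 * FreeGroup.of 1 *
      (FreeGroup.of 1 * FreeGroup.of 0 * FreeGroup.of 1 * FreeGroup.of 0)⁻¹}

/-- The complex reflection group G₅, by its presentation ⟨a,b | a³ = b³ = 1, abab = baba⟩. -/
abbrev G5 := PresentedGroup g5Rels

def ga : G5 := PresentedGroup.of 0
def gb : G5 := PresentedGroup.of 1

/-- The conjugacy class of `a` in G₅. -/
def S1 : Set G5 := {t | IsConj ga t}
/-- The conjugacy class of `b` in G₅. -/
def S2 : Set G5 := {t | IsConj gb t}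
/-- The conjugacy class of `a²` in G₅. -/
def S3 : Set G5 := {t | IsConj (ga ^ 2) t}
/-- The conjugacy class of `b²` in G₅. -/
def S4 : Set G5 := {t | IsConj (gb ^ 2) t}

/-- A reflection in G₅: a conjugate of a, b, a², or b². -/
def IsReflection5 (t : G5) : Prop := t ∈ S1 ∨ t ∈ S2 ∨ t ∈ S3 ∨ t ∈ S4

/-- A Coxeter element of G₅: an element of order 12. -/
def IsCoxeter5 (c : G5) : Prop := orderOf c = 12

/-- Coordinates (times 3, in the basis 1, ω) of the 24 elements. -/
def g4E : List (List ℤ) :=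
  [[3, 0, 0, 0, 0, 0, 3, 0],
   [3, 0, 0, 0, 0, 0, 0, 3],
   [1, 2, -3, -3, 2, 2, 2, 1],
   [3, 0, 0, 0, 0, 0, -3, -3],
   [1, 2, -3, -3, -2, 0, -1, 1],
   [1, 2, 3, 0, 2, 2, -1, 1],
   [-1, -2, 0, -3, 0, 2, 1, -1],
   [1, 2, -3, -3, 0, -2, -1, -2],
   [1, 2, 3, 0, -2, 0, -1, -2],
   [-1, -2, 0, -3, -2, -2, 1, 2],
   [1, 2, 0, 3, 2, 2, -1, -2],
   [-1, -2, 3, 3, 0, 2, 1, 2],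
   [1, 2, 3, 0, 0, -2, 2, 1],
   [-1, -2, 0, -3, 2, 0, -2, -1],
   [1, 2, 0, 3, -2, 0, 2, 1],
   [-1, -2, 3, 3, -2, -2, -2, -1],
   [-3, 0, 0, 0, 0, 0, 0, -3],
   [-1, -2, -3, 0, 0, 2, -2, -1],
   [1, 2, 0, 3, 0, -2, -1, 1],
   [-1, -2, 3, 3, 2, 0, 1, -1],
   [-3, 0, 0, 0, 0, 0, 3, 3],
   [-1, -2, -3, 0, -2, -2, 1, -1],
   [-3, 0, 0, 0, 0, 0, -3, 0],
   [-1, -2, -3, 0, 2, 0, 1, 2]]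

def g4en (i k : ℕ) : ℤ := (g4E.getD i []).getD k 0

/-- Encoded multiplication table. -/
def g4T : ℕ := 0xb2244a15ee606024ace0554c39c5b7400a321981135d13a5575cab3a3e16a15c28316a402c734c83945a17dd3528d81135003a55721a559ba2f82ed4911ee606c84ace0a16a61c0516aaf3218317092b05d0aad0732be0d658f283147b227228e846bc4175d205d4d1605003a4a321a55135d17aaebb4e907096a4028534c838322d0d8f74caaf1341751cd31d4b28c02f62ec94508e7bac84ae44a16a66060289c0ab8e6d0c52b05c86ad073709f06a1563964c51e7228e0c6bc41b22e90509533a2b3a475911af0c58ebd80b44e862c04a5aa8534dc28322d402c7b9072a85e905cd31d44d8c02f51d7649654231c84ac86ad031709f005d0ab0e65935879ca0c6bd47b22e928e84a882e881661d5af0c4e9bd80b91274331d01214534c4d8c01751d761d4b2a05ec72504ad2307baf65a9289c8c52358209c036bce9bd875912740c58e80168518a28c2f65aab49c8c57b9ac1250701061bdab49ca307b9ac5a928398a418820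

def g4mul (i j : ℕ) : ℕ := (g4T >>> (5 * (24 * i + j))) % 32

def g4iv (i : ℕ) : ℕ := (0x459d063c94954b33a557589b109860 >>> (5 * i)) % 32

def g4R : List ℕ := [1, 2, 3, 6, 12, 14, 19, 21]

theorem g4_mul_table : ∀ i < 24, ∀ j < 24, g4mul i j < 24 ∧
    (∀ r < 2, ∀ c < 2,
      3 * g4en (g4mul i j) (4*r+2*c) =
        g4en i (4*r) * g4en j (2*c) - g4en i (4*r+1) * g4en j (2*c+1)
        + g4en i (4*r+2) * g4en j (4+2*c) - g4en i (4*r+3) * g4en j (4+2*c+1) ∧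
      3 * g4en (g4mul i j) (4*r+2*c+1) =
        g4en i (4*r) * g4en j (2*c+1) + g4en i (4*r+1) * g4en j (2*c)
          - g4en i (4*r+1) * g4en j (2*c+1)
        + g4en i (4*r+2) * g4en j (4+2*c+1) + g4en i (4*r+3) * g4en j (4+2*c)
          - g4en i (4*r+3) * g4en j (4+2*c+1)) := by
  decide +kernel

theorem g4_iv_table : ∀ i < 24, g4iv i < 24 ∧ g4mul i (g4iv i) = 0 := by
  decide +kernel

theorem g4_refl_table : ∀ i < 24, (i ≠ 0 ∧
    (g4en i 0 - 3) * (g4en i 6 - 3) - g4en i 1 * g4en i 7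
      - (g4en i 2 * g4en i 4 - g4en i 3 * g4en i 5) = 0 ∧
    (g4en i 0 - 3) * g4en i 7 + g4en i 1 * (g4en i 6 - 3) - g4en i 1 * g4en i 7
      - (g4en i 2 * g4en i 5 + g4en i 3 * g4en i 4 - g4en i 3 * g4en i 5) = 0) →
    i ∈ g4R := by
  decide +kernel

/-- forward and backward conjugation -/
def g4f (a b : ℕ) : ℕ := g4mul (g4mul (g4iv b) a) b
def g4b (a b : ℕ) : ℕ := g4mul (g4mul a b) (g4iv a)

def s30 (a b c : ℕ) : Bool := Nat.beq a b || Nat.beq b c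
def s31 (a b c : ℕ) : Bool := s30 a b c || s30 b (g4f a b) c || s30 (g4b a b) a c ||
  s30 a c (g4f b c) || s30 a (g4b b c) b
def s32 (a b c : ℕ) : Bool := s31 a b c || s31 b (g4f a b) c || s31 (g4b a b) a c ||
  s31 a c (g4f b c) || s31 a (g4b b c) b

def s40 (a b c d : ℕ) : Bool := s32 a b c || s32 b c d
def s41 (a b c d : ℕ) : Bool := s40 a b c d || s40 b (g4f a b) c d || s40 (g4b a b) a c d ||
  s40 a c (g4f b c) d || s40 a (g4b b c) b d || s40 a b d (g4f c d) || s40 a b (g4b c d) c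

theorem g4_s3 : (g4R.all fun a => g4R.all fun b => g4R.all fun c =>
    (Nat.beq (g4mul (g4mul (g4mul a b) c) (g4mul (g4mul a b) c)) 0 ||
     Nat.beq (g4mul (g4mul (g4mul a b) c) (g4mul (g4mul (g4mul a b) c) (g4mul (g4mul a b) c))) 0)
      || s32 a b c) = true := by
  decide +kernel

theorem g4_s4 : (g4R.all fun a => g4R.all fun b => g4R.all fun c => g4R.all fun d =>
    Nat.beq (g4mul (g4mul (g4mul a b) c) d) 0 || s41 a b c d) = true := by
  decide +kernel

inductive HGood {G : Type*} [Group G] : List G → Prop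
  | pair (l : List G) (x : G) (r : List G) : HGood (l ++ x :: x :: r)
  | fwd (l : List G) (x y : G) (r : List G) :
      HGood (l ++ y :: (y⁻¹ * x * y) :: r) → HGood (l ++ x :: y :: r)
  | bwd (l : List G) (x y : G) (r : List G) :
      HGood (l ++ (x * y * x⁻¹) :: x :: r) → HGood (l ++ x :: y :: r)

theorem HGood.append {G : Type*} [Group G] {L : List G} (h : HGood L) (S : List G) :
    HGood (L ++ S) := by
  induction h with
  | pair l x r => simpa using HGood.pair l x (r ++ S)
  | fwd l x y r _ ih => simpa using HGood.fwd l x y (r ++ S) (by simpa using ih)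
  | bwd l x y r _ ih => simpa using HGood.bwd l x y (r ++ S) (by simpa using ih)

theorem HGood.cons {G : Type*} [Group G] {L : List G} (h : HGood L) (p : G) :
    HGood (p :: L) := by
  induction h with
  | pair l x r => exact HGood.pair (p :: l) x r
  | fwd l x y r _ ih => exact HGood.fwd (p :: l) x y r ih
  | bwd l x y r _ ih => exact HGood.bwd (p :: l) x y r ih

theorem ofFn_split {G : Type*} {k : ℕ} (t : Fin k → G) (l : List G) (x y : G) (r : List G)
    (e : List.ofFn t = l ++ x :: y :: r) :
    ∃ h : l.length + 1 < k, t ⟨l.length, Nat.lt_of_succ_lt h⟩ = x ∧ t ⟨l.length + 1, h⟩ = y ∧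
      ∀ x' y' : G, ∃ t' : Fin k → G, List.ofFn t' = l ++ x' :: y' :: r ∧
        t' ⟨l.length, Nat.lt_of_succ_lt h⟩ = x' ∧ t' ⟨l.length + 1, h⟩ = y' ∧
        ∀ j : Fin k, (j : ℕ) ≠ l.length → (j : ℕ) ≠ l.length + 1 → t' j = t j := by
  have hl : k = l.length + (r.length + 2) := by
    have := congrArg List.length e
    simpa using this
  have key : ∀ (j : ℕ) (hj : j < k), t ⟨j, hj⟩ = (l ++ x :: y :: r)[j]'(by simp; omega) := by
    intro j hj
    simp [← e]
  refine ⟨by omega, ?_, ?_, ?_⟩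
  · rw [key]; simp
  · rw [key]; simp [List.getElem_append_right]
  · intro x' y'
    refine ⟨fun j => (l ++ x' :: y' :: r)[(j : ℕ)]'(by have := j.isLt; simp; omega), ?_, ?_, ?_, ?_⟩
    · apply List.ext_getElem
      · simp; omega
      · intro i h1 h2
        simp
    · simp
    · simp [List.getElem_append_right]
    · rintro ⟨j, hj⟩ h1 h2
      simp only at h1 h2
      rw [key]
      simp only
      by_cases hlt : j < l.length
      · rw [List.getElem_append_left hlt, List.getElem_append_left hlt]
      · obtain ⟨m, rfl⟩ : ∃ m, j = l.length + (m + 2) := ⟨j - l.length - 2, by omega⟩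
        simp [List.getElem_append_right]

theorem HGood.toFn {G : Type*} [Group G] {L : List G} (h : HGood L) {k : ℕ} :
    ∀ t : Fin k → G, List.ofFn t = L →
      ∃ s : Fin k → G, SameHurwitzOrbit t s ∧ HasConsecutiveEqualPair s := by
  induction h with
  | pair l x r =>
    intro t e
    obtain ⟨h, h1, h2, -⟩ := ofFn_split t l x x r e
    exact ⟨t, Relation.EqvGen.refl _, l.length, h, h1.trans h2.symm⟩
  | fwd l x y r _ ih =>
    intro t e
    obtain ⟨h, h1, h2, h3⟩ := ofFn_split t l x y r e
    obtain ⟨t', e', a1, a2, a3⟩ := h3 y (y⁻¹ * x * y)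
    obtain ⟨s, hs, hp⟩ := ih t' e'
    refine ⟨s, Relation.EqvGen.trans _ _ _ (Relation.EqvGen.rel _ _ ?_) hs, hp⟩
    exact ⟨l.length, h, by rw [a1, h2], by rw [a2, h1, h2], a3⟩
  | bwd l x y r _ ih =>
    intro t e
    obtain ⟨h, h1, h2, h3⟩ := ofFn_split t l x y r e
    obtain ⟨t', e', a1, a2, a3⟩ := h3 (x * y * x⁻¹) x
    obtain ⟨s, hs, hp⟩ := ih t' e'
    refine ⟨s, Relation.EqvGen.trans _ _ _
      (Relation.EqvGen.symm _ _ (Relation.EqvGen.rel _ _ ?_)) hs, hp⟩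
    refine ⟨l.length, h, by rw [a2, h1], ?_, fun j hj hj' => (a3 j hj hj').symm⟩
    rw [a1, a2, h2]; group

/-! ### The matrices -/

theorem om_prim : IsPrimitiveRoot ω 3 := by
  have := Complex.isPrimitiveRoot_exp 3 (by norm_num)
  simpa [ω] using this

theorem om_sq : ω ^ 2 = -1 - ω := by
  have h := om_prim.geom_sum_eq_zero (by norm_num)
  simp [Finset.sum_range_succ] at h
  linear_combination h

theorem om_indep (a b : ℤ) (h : (a : ℂ) + b * ω = 0) : a = 0 ∧ b = 0 := by
  have h2 : ((a : ℂ) ^ 2 - a * b + b ^ 2) = 0 := by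
    linear_combination (a - b - b * ω) * h + b ^ 2 * om_sq
  have h3 : a ^ 2 - a * b + b ^ 2 = 0 := by exact_mod_cast h2
  constructor <;> nlinarith [sq_nonneg (a - b), sq_nonneg a, sq_nonneg b, sq_nonneg (a+b)]

def g4M (i : ℕ) : Matrix (Fin 2) (Fin 2) ℂ :=
  !![((g4en i 0 : ℂ) + g4en i 1 * ω) / 3, ((g4en i 2 : ℂ) + g4en i 3 * ω) / 3;
     ((g4en i 4 : ℂ) + g4en i 5 * ω) / 3, ((g4en i 6 : ℂ) + g4en i 7 * ω) / 3]

theorem om_combine (a b c d a' b' c' d' p q : ℤ)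
    (h1 : 3 * p = a * c - b * d + a' * c' - b' * d')
    (h2 : 3 * q = a * d + b * c - b * d + a' * d' + b' * c' - b' * d') :
    ((a : ℂ) + b * ω) / 3 * ((c + d * ω) / 3) + ((a' : ℂ) + b' * ω) / 3 * ((c' + d' * ω) / 3)
      = (p + q * ω) / 3 := by
  have h1' : (3 : ℂ) * p = a * c - b * d + a' * c' - b' * d' := by exact_mod_cast h1
  have h2' : (3 : ℂ) * q = a * d + b * c - b * d + a' * d' + b' * c' - b' * d' := by
    exact_mod_cast h2
  linear_combination (-1/9) * h1' - ω / 9 * h2' + (b * d + b' * d') / 9 * om_sq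

theorem g4M_mul (i j : ℕ) (hi : i < 24) (hj : j < 24) :
    g4M i * g4M j = g4M (g4mul i j) := by
  have h := (g4_mul_table i hi j hj).2
  have h00 := h 0 (by norm_num) 0 (by norm_num)
  have h01 := h 0 (by norm_num) 1 (by norm_num)
  have h10 := h 1 (by norm_num) 0 (by norm_num)
  have h11 := h 1 (by norm_num) 1 (by norm_num)
  norm_num at h00 h01 h10 h11
  simp only [g4M, Matrix.mul_fin_two]
  rw [om_combine _ _ _ _ _ _ _ _ _ _ h00.1 h00.2, om_combine _ _ _ _ _ _ _ _ _ _ h01.1 h01.2,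
    om_combine _ _ _ _ _ _ _ _ _ _ h10.1 h10.2, om_combine _ _ _ _ _ _ _ _ _ _ h11.1 h11.2]

theorem g4M_zero : g4M 0 = 1 := by
  simp [g4M, g4en, g4E, Matrix.one_fin_two]

theorem g4M_one : g4M 1 = AMat := by
  simp [g4M, g4en, g4E, AMat]

theorem g4M_two : g4M 2 = BMat := by
  simp [g4M, g4en, g4E, BMat, om_sq]
  refine ⟨⟨?_, ?_⟩, ?_, ?_⟩ <;> ring

def G4Rep (x : G4) (i : ℕ) : Prop := i < 24 ∧ mat x = g4M i

theorem mat_mul' (x y : G4) : mat (x * y) = mat x * mat y := by simp [mat]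

theorem mat_inj {x y : G4} (h : mat x = mat y) : x = y := by
  apply Subtype.ext
  apply Units.ext
  exact h

theorem mat_one' : mat 1 = 1 := by simp [mat]

theorem G4Rep.mul {x y : G4} {i j : ℕ} (hx : G4Rep x i) (hy : G4Rep y j) :
    G4Rep (x * y) (g4mul i j) :=
  ⟨(g4_mul_table i hx.1 j hy.1).1, by rw [mat_mul', hx.2, hy.2, g4M_mul i j hx.1 hy.1]⟩

theorem G4Rep.inv {x : G4} {i : ℕ} (hx : G4Rep x i) : G4Rep x⁻¹ (g4iv i) := by
  obtain ⟨h1, h2⟩ := g4_iv_table i hx.1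
  refine ⟨h1, ?_⟩
  have h3 : mat x * g4M (g4iv i) = 1 := by
    rw [hx.2, g4M_mul _ _ hx.1 h1, h2, g4M_zero]
  have h4 : mat x⁻¹ * mat x = 1 := by rw [← mat_mul', inv_mul_cancel, mat_one']
  calc mat x⁻¹ = mat x⁻¹ * (mat x * g4M (g4iv i)) := by rw [h3, mul_one]
    _ = g4M (g4iv i) := by rw [← mul_assoc, h4, one_mul]

theorem G4Rep.eq {x y : G4} {i : ℕ} (hx : G4Rep x i) (hy : G4Rep y i) : x = y :=
  mat_inj (hx.2.trans hy.2.symm)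

theorem rep_one : G4Rep 1 0 := ⟨by norm_num, by rw [mat_one', g4M_zero]⟩

theorem exists_rep (x : G4) : ∃ i, G4Rep x i := by
  obtain ⟨x, hx⟩ := x
  unfold G4 at hx
  induction hx using Subgroup.closure_induction with
  | mem x h =>
    rcases h with h | h
    · exact ⟨1, by norm_num, by rw [g4M_one]; exact h⟩
    · exact ⟨2, by norm_num, by rw [g4M_two]; exact h⟩
  | one => exact ⟨0, rep_one⟩
  | mul x y hx hy ihx ihy =>
    obtain ⟨i, hi⟩ := ihx
    obtain ⟨j, hj⟩ := ihy
    exact ⟨_, G4Rep.mul hi hj⟩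
  | inv x hx ih =>
    obtain ⟨i, hi⟩ := ih
    exact ⟨_, G4Rep.inv hi⟩

theorem refl_rep (x : G4) (h : IsReflection x) : ∃ i ∈ g4R, G4Rep x i := by
  obtain ⟨i, hi⟩ := exists_rep x
  refine ⟨i, ?_, hi⟩
  obtain ⟨h1, h2⟩ := h
  have h0 : i ≠ 0 := by
    rintro rfl
    exact h1 (hi.eq rep_one)
  rw [hi.2, g4M, Matrix.one_fin_two, Matrix.det_fin_two] at h2
  simp at h2
  have h3 := om_indep
    ((g4en i 0 - 3) * (g4en i 6 - 3) - g4en i 1 * g4en i 7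
      - (g4en i 2 * g4en i 4 - g4en i 3 * g4en i 5))
    ((g4en i 0 - 3) * g4en i 7 + g4en i 1 * (g4en i 6 - 3) - g4en i 1 * g4en i 7
      - (g4en i 2 * g4en i 5 + g4en i 3 * g4en i 4 - g4en i 3 * g4en i 5))
    (by
      push_cast
      linear_combination 9 * h2 -
        ((g4en i 1 : ℂ) * g4en i 7 - g4en i 3 * g4en i 5) * om_sq)
  exact g4_refl_table i hi.1 ⟨h0, h3.1, h3.2⟩

theorem G4Rep.f {x y : G4} {i j : ℕ} (hx : G4Rep x i) (hy : G4Rep y j) :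
    G4Rep (y⁻¹ * x * y) (g4f i j) := (hy.inv.mul hx).mul hy

theorem G4Rep.b {x y : G4} {i j : ℕ} (hx : G4Rep x i) (hy : G4Rep y j) :
    G4Rep (x * y * x⁻¹) (g4b i j) := (hx.mul hy).mul hx.inv

theorem good30 {x y z : G4} {a b c : ℕ} (hx : G4Rep x a) (hy : G4Rep y b) (hz : G4Rep z c)
    (h : s30 a b c = true) : HGood [x, y, z] := by
  simp only [s30, Bool.or_eq_true, Nat.beq_eq] at h
  rcases h with rfl | rfl
  · obtain rfl := hx.eq hy
    exact HGood.pair [] _ _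
  · obtain rfl := hy.eq hz
    exact HGood.pair [x] _ _

theorem good31 {x y z : G4} {a b c : ℕ} (hx : G4Rep x a) (hy : G4Rep y b) (hz : G4Rep z c)
    (h : s31 a b c = true) : HGood [x, y, z] := by
  simp only [s31, Bool.or_eq_true] at h
  rcases h with (((h | h) | h) | h) | h
  · exact good30 hx hy hz h
  · exact HGood.fwd [] x y [z] (good30 hy (hx.f hy) hz h)
  · exact HGood.bwd [] x y [z] (good30 (hx.b hy) hx hz h)
  · exact HGood.fwd [x] y z [] (good30 hx hz (hy.f hz) h)
  · exact HGood.bwd [x] y z [] (good30 hx (hy.b hz) hy h)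

theorem good32 {x y z : G4} {a b c : ℕ} (hx : G4Rep x a) (hy : G4Rep y b) (hz : G4Rep z c)
    (h : s32 a b c = true) : HGood [x, y, z] := by
  simp only [s32, Bool.or_eq_true] at h
  rcases h with (((h | h) | h) | h) | h
  · exact good31 hx hy hz h
  · exact HGood.fwd [] x y [z] (good31 hy (hx.f hy) hz h)
  · exact HGood.bwd [] x y [z] (good31 (hx.b hy) hx hz h)
  · exact HGood.fwd [x] y z [] (good31 hx hz (hy.f hz) h)
  · exact HGood.bwd [x] y z [] (good31 hx (hy.b hz) hy h)

theorem good40 {x y z w : G4} {a b c d : ℕ} (hx : G4Rep x a) (hy : G4Rep y b) (hz : G4Rep z c)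
    (hw : G4Rep w d) (h : s40 a b c d = true) : HGood [x, y, z, w] := by
  simp only [s40, Bool.or_eq_true] at h
  rcases h with h | h
  · exact (good32 hx hy hz h).append [w]
  · exact (good32 hy hz hw h).cons x

theorem good41 {x y z w : G4} {a b c d : ℕ} (hx : G4Rep x a) (hy : G4Rep y b) (hz : G4Rep z c)
    (hw : G4Rep w d) (h : s41 a b c d = true) : HGood [x, y, z, w] := by
  simp only [s41, Bool.or_eq_true] at h
  rcases h with (((((h | h) | h) | h) | h) | h) | h
  · exact good40 hx hy hz hw h
  · exact HGood.fwd [] x y [z, w] (good40 hy (hx.f hy) hz hw h)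
  · exact HGood.bwd [] x y [z, w] (good40 (hx.b hy) hx hz hw h)
  · exact HGood.fwd [x] y z [w] (good40 hx hz (hy.f hz) hw h)
  · exact HGood.bwd [x] y z [w] (good40 hx (hy.b hz) hy hw h)
  · exact HGood.fwd [x, y] z w [] (good40 hx hy hw (hz.f hw) h)
  · exact HGood.bwd [x, y] z w [] (good40 hx hy (hz.b hw) hz h)

theorem good3 {x y z : G4} (hx : IsReflection x) (hy : IsReflection y) (hz : IsReflection z) :
    ((x * y * z) * (x * y * z) = 1 ∨ (x * y * z) * ((x * y * z) * (x * y * z)) = 1) ∨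
      HGood [x, y, z] := by
  obtain ⟨a, ha, rx⟩ := refl_rep x hx
  obtain ⟨b, hb, ry⟩ := refl_rep y hy
  obtain ⟨c, hc, rz⟩ := refl_rep z hz
  have h := g4_s3
  simp only [List.all_eq_true] at h
  have h := h a ha b hb c hc
  simp only [Bool.or_eq_true, Nat.beq_eq] at h
  have rp := (rx.mul ry).mul rz
  rcases h with (h | h) | h
  · have := rp.mul rp
    rw [h] at this
    exact Or.inl (Or.inl (this.eq rep_one))
  · have := rp.mul (rp.mul rp)
    rw [h] at this
    exact Or.inl (Or.inr (this.eq rep_one))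
  · exact Or.inr (good32 rx ry rz h)

theorem good4 {x y z w : G4} (hx : IsReflection x) (hy : IsReflection y) (hz : IsReflection z)
    (hw : IsReflection w) : x * y * z * w = 1 ∨ HGood [x, y, z, w] := by
  obtain ⟨a, ha, rx⟩ := refl_rep x hx
  obtain ⟨b, hb, ry⟩ := refl_rep y hy
  obtain ⟨c, hc, rz⟩ := refl_rep z hz
  obtain ⟨d, hd, rw'⟩ := refl_rep w hw
  have h := g4_s4
  simp only [List.all_eq_true] at h
  have h := h a ha b hb c hc d hd
  simp only [Bool.or_eq_true, Nat.beq_eq] at h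
  have rp := ((rx.mul ry).mul rz).mul rw'
  rcases h with h | h
  · rw [h] at rp
    exact Or.inl (rp.eq rep_one)
  · exact Or.inr (good41 rx ry rz rw' h)

theorem good5 {x y z w v : G4} (hx : IsReflection x) (hy : IsReflection y) (hz : IsReflection z)
    (hw : IsReflection w) (hv : IsReflection v) : HGood [x, y, z, w, v] := by
  rcases good4 hx hy hz hw with h | h
  swap
  · exact h.append [v]
  rcases good4 hy hz hw hv with h' | h'
  swap
  · exact h'.cons x
  have e : v = x := by
    have h1 : x * (y * z * w) = 1 := by rw [← h]; group
    exact (eq_inv_of_mul_eq_one_right h').trans (eq_inv_of_mul_eq_one_left h1).symm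
  subst e
  apply HGood.bwd [v, y, z] w v []
  apply HGood.bwd [v, y] z _ [w]
  apply HGood.bwd [v] y _ [z, w]
  apply HGood.bwd [] v _ [y, z, w]
  have e2 : v * (y * (z * (w * v * w⁻¹) * z⁻¹) * y⁻¹) * v⁻¹ = v := by
    calc _ = (v * y * z * w) * v * (v * y * z * w)⁻¹ := by group
      _ = v := by rw [h]; group
  rw [e2]
  exact HGood.pair [] v _

theorem coxeter_pow (c : G4) (hc : IsCoxeter c) (n : ℕ) (h : c ^ n = 1) : 6 ∣ n := by
  obtain ⟨ζ, hz, hd⟩ := hc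
  rw [← hz.pow_eq_one_iff_dvd]
  have hm : (mat c) ^ n = 1 := by
    have : ∀ m : ℕ, mat (c ^ m) = mat c ^ m := by
      intro m
      induction m with
      | zero => simp [mat_one']
      | succ m ih => rw [pow_succ, mat_mul', ih, pow_succ]
    rw [← this, h, mat_one']
  have hcomm : Commute (mat c) (ζ • (1 : Matrix (Fin 2) (Fin 2) ℂ)) :=
    (Commute.one_right _).smul_right ζ
  obtain ⟨q, hq⟩ := hcomm.sub_dvd_pow_sub_pow n
  have h2 := congrArg Matrix.det hq
  rw [Matrix.det_mul, hd, zero_mul, hm, smul_pow, one_pow, Matrix.one_fin_two,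
    Matrix.det_fin_two] at h2
  simp at h2
  linear_combination -h2

theorem g4_pair_lemma (k : ℕ) (hk : 3 ≤ k) (c : G4) (hc : IsCoxeter c)
    (t : Fin k → G4) (ht : ∀ i, IsReflection (t i)) (hp : (List.ofFn t).prod = c) :
    ∃ s : Fin k → G4, SameHurwitzOrbit t s ∧ HasConsecutiveEqualPair s := by
  have hprod : ∀ L : List G4, (∀ x ∈ L, IsReflection x) → 3 ≤ L.length → L.prod = c → HGood L := by
    intro L hL hlen hpr
    match L, hL, hlen, hpr with
    | [x, y, z], hL, _, hpr =>
      have e : x * y * z = c := by rw [← hpr]; simp [mul_assoc]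
      rcases good3 (hL x (by simp)) (hL y (by simp)) (hL z (by simp)) with (h | h) | h
      · rw [e] at h
        have := coxeter_pow c hc 2 (by rw [pow_two, h])
        omega
      · rw [e] at h
        have := coxeter_pow c hc 3 (by rw [pow_succ', pow_two, h])
        omega
      · exact h
    | [x, y, z, w], hL, _, hpr =>
      have e : x * y * z * w = c := by rw [← hpr]; simp [mul_assoc]
      rcases good4 (hL x (by simp)) (hL y (by simp)) (hL z (by simp)) (hL w (by simp)) with h | h
      · rw [e] at h
        have := coxeter_pow c hc 1 (by rw [pow_one, h])
        omega
      · exact h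
    | x :: y :: z :: w :: v :: r, hL, _, hpr =>
      exact (good5 (hL x (by simp)) (hL y (by simp)) (hL z (by simp)) (hL w (by simp))
        (hL v (by simp))).append r
  refine (hprod (List.ofFn t) ?_ ?_ hp).toFn t rfl
  · intro x hx
    obtain ⟨i, rfl⟩ := List.mem_ofFn.mp hx
    exact ht i
  · simpa using hk
end
end

section
/- Let (R_i, R_j) be a pair of square classes of G5 (that is, (R₁,R₃) or (R₂,R₄)), and let t₁ ∈ R_i and t₃ ∈ R_j with t₁ ≠ t₃² (equivalently, t₁ and t₃ do not commute). Then the Hurwitz orbit of the pair (t₁, t₃) has exactly four elements; exactly four distinct reflections appear as entries of pairs in this orbit, namely t₁, t₂ ∈ R_i and t₃, t₄ ∈ R_j; and moreover R_i = {t₁, t₂, t₃², t₄²}. -/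
noncomputable section

open Matrix Complex

theorem hm2 {G : Type*} [Group G] (s s' : Fin 2 → G) :
    IsHurwitzMove s s' ↔ s' 0 = s 1 ∧ s 0 * s 1 = s' 0 * s' 1 := by
  constructor
  · rintro ⟨i, h, h1, h2, -⟩
    obtain rfl : i = 0 := by omega
    have h1' : s' 0 = s 1 := h1
    have h2' : s' 1 = (s 1)⁻¹ * s 0 * s 1 := h2
    refine ⟨h1', ?_⟩
    rw [h1', h2']; group
  · rintro ⟨h1, h2⟩
    refine ⟨0, by omega, h1, ?_, ?_⟩
    · change s' 1 = (s 1)⁻¹ * s 0 * s 1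
      rw [mul_assoc, h2, h1]; group
    · intro j h0 h1
      have := j.isLt
      simp only [zero_add] at h1
      omega

theorem orb4 {G : Type*} [Group G] (x y u v : G) (h1 : x * y = y * u) (h2 : y * u = u * v)
    (h3 : u * v = v * x) (h4 : v * x = x * y) :
    {s : Fin 2 → G | SameHurwitzOrbit ![x, y] s} = {![x, y], ![y, u], ![u, v], ![v, x]} := by
  have key : ∀ s s' : Fin 2 → G, IsHurwitzMove s s' →
      (s ∈ ({![x, y], ![y, u], ![u, v], ![v, x]} : Set (Fin 2 → G)) ↔
        s' ∈ ({![x, y], ![y, u], ![u, v], ![v, x]} : Set (Fin 2 → G))) := by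
    intro s s' h
    rw [hm2] at h
    obtain ⟨ha, hb⟩ := h
    have e : ∀ (w : Fin 2 → G) (p q : G), w = ![p, q] ↔ w 0 = p ∧ w 1 = q := by
      intro w p q
      constructor
      · rintro rfl; simp
      · rintro ⟨rfl, rfl⟩; ext i; fin_cases i <;> rfl
    simp only [Set.mem_insert_iff, Set.mem_singleton_iff, e]
    have c1 : ∀ p q r : G, p * q = q * r → s 0 = p ∧ s 1 = q → s' 0 = q ∧ s' 1 = r := by
      rintro p q r hh ⟨e1, e2⟩
      rw [e2] at ha
      refine ⟨ha, ?_⟩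
      rw [e1, e2, ha, hh] at hb
      exact (mul_left_cancel hb).symm
    have c2 : ∀ p q r : G, p * q = q * r → s' 0 = q ∧ s' 1 = r → s 0 = p ∧ s 1 = q := by
      rintro p q r hh ⟨e1, e2⟩
      rw [e1] at ha
      refine ⟨?_, ha.symm⟩
      rw [e1, e2, ← ha, ← hh] at hb
      exact mul_right_cancel hb
    constructor
    · rintro (h | h | h | h)
      · exact Or.inr (Or.inl (c1 _ _ _ h1 h))
      · exact Or.inr (Or.inr (Or.inl (c1 _ _ _ h2 h)))
      · exact Or.inr (Or.inr (Or.inr (c1 _ _ _ h3 h)))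
      · exact Or.inl (c1 _ _ _ h4 h)
    · rintro (h | h | h | h)
      · exact Or.inr (Or.inr (Or.inr (c2 _ _ _ h4 h)))
      · exact Or.inl (c2 _ _ _ h1 h)
      · exact Or.inr (Or.inl (c2 _ _ _ h2 h))
      · exact Or.inr (Or.inr (Or.inl (c2 _ _ _ h3 h)))
  have m1 : IsHurwitzMove ![x, y] ![y, u] := (hm2 _ _).2 ⟨rfl, h1⟩
  have m2 : IsHurwitzMove ![y, u] ![u, v] := (hm2 _ _).2 ⟨rfl, h2⟩
  have m3 : IsHurwitzMove ![u, v] ![v, x] := (hm2 _ _).2 ⟨rfl, h3⟩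
  have o1 := Relation.EqvGen.rel _ _ m1
  have o2 := o1.trans _ _ _ (Relation.EqvGen.rel _ _ m2)
  have o3 := o2.trans _ _ _ (Relation.EqvGen.rel _ _ m3)
  ext s
  constructor
  · intro h
    have gen : ∀ s s' : Fin 2 → G, Relation.EqvGen IsHurwitzMove s s' →
      (s ∈ ({![x, y], ![y, u], ![u, v], ![v, x]} : Set (Fin 2 → G)) ↔
        s' ∈ ({![x, y], ![y, u], ![u, v], ![v, x]} : Set (Fin 2 → G))) := by
      intro s s' h
      induction h with
      | rel _ _ h => exact key _ _ h
      | refl _ => exact Iff.rfl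
      | symm _ _ _ ih => exact ih.symm
      | trans _ _ _ _ _ i1 i2 => exact i1.trans i2
    exact (gen _ _ h).1 (by simp)
  · rintro (rfl | rfl | rfl | rfl)
    · exact Relation.EqvGen.refl _
    · exact o1
    · exact o2
    · exact o3

theorem ncard4 {α : Type*} (a b c d : α) (hab : a ≠ b) (hac : a ≠ c) (had : a ≠ d)
    (hbc : b ≠ c) (hbd : b ≠ d) (hcd : c ≠ d) : ({a, b, c, d} : Set α).ncard = 4 := by
  classical
  have : ({a, b, c, d} : Set α) = (({a, b, c, d} : Finset α) : Set α) := by simp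
  rw [this, Set.ncard_coe_finset]
  simp [Finset.card_insert_of_notMem, *]

def pp : Equiv.Perm (Fin 4) := c[1, 3, 2]
def qq : Equiv.Perm (Fin 4) := c[0, 2, 1]
def sg : Fin 4 → Equiv.Perm (Fin 4) := ![pp, qq * pp ^ 2, pp ^ 2 * qq, qq ^ 2]

theorem sg_tab : ∀ i j : Fin 4, i ≠ j → ∃ k l : Fin 4, sg j i = k ∧ sg k l = j ∧ sg l k = i ∧
    sg i j = l ∧ i ≠ k ∧ j ≠ l ∧ (∀ x, x = i ∨ x = k ∨ x = j ∨ x = l) := by decide +kernel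

theorem sg_inj : ∀ i j : Fin 4, sg i = sg j → i = j := by decide +kernel
theorem sg_sq : ∀ i j : Fin 4, sg i ≠ sg j ^ 2 := by decide +kernel

theorem core {G : Type*} [Group G] (a b : G) (ha : a ^ 3 = 1) (hb : b ^ 3 = 1)
    (hab : a * b * a * b = b * a * b * a) (φ : G →* Equiv.Perm (Fin 4))
    (hpa : φ a = pp) (hpb : φ b = qq) (hgen : Subgroup.closure {a, b} = ⊤)
    (t₁ t₃ : G) (h₁ : IsConj a t₁) (h₃ : IsConj (a ^ 2) t₃) (hne : t₁ ≠ t₃ ^ 2) :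
    {s : Fin 2 → G | SameHurwitzOrbit ![t₁, t₃] s}.ncard = 4 ∧
    ∃ t₂ t₄ : G, IsConj a t₂ ∧ IsConj (a ^ 2) t₄ ∧
      {r : G | Appears r ![t₁, t₃]} = {t₁, t₂, t₃, t₄} ∧
      ({t₁, t₂, t₃, t₄} : Set G).ncard = 4 ∧
      {t | IsConj a t} = {t₁, t₂, t₃ ^ 2, t₄ ^ 2} := by
  obtain ⟨z, hz⟩ : ∃ z, z = a * b * a * b := ⟨_, rfl⟩
  have hza : a * z = z * a := by rw [hz]; nth_rw 1 [hab]; group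
  have hzb : b * z = z * b := by rw [hz]; nth_rw 2 [hab]; group
  have hai : a⁻¹ = a ^ 2 := by rw [inv_eq_iff_mul_eq_one, ← pow_succ']; exact ha
  have hbi : b⁻¹ = b ^ 2 := by rw [inv_eq_iff_mul_eq_one, ← pow_succ']; exact hb
  obtain ⟨E, hE⟩ : ∃ E : Fin 4 → G,
    E = ![a, z * (b * a ^ 2), z * (a ^ 2 * b), z ^ 2 * b ^ 2] := ⟨_, rfl⟩
  have E0 : E 0 = a := by rw [hE]; rfl
  have E1 : E 1 = z * (b * a⁻¹) := by rw [hE, hai]; rfl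
  have E2 : E 2 = z * (a⁻¹ * b) := by rw [hE, hai]; rfl
  have E3 : E 3 = z ^ 2 * b⁻¹ := by rw [hE, hbi]; rfl
  have hφz : φ z = 1 := by
    rw [hz]; simp only [map_mul, hpa, hpb]; decide +kernel
  have hφE : ∀ i, φ (E i) = sg i := by
    intro i
    rw [hE]
    fin_cases i <;> simp [hφz, hpa, hpb, sg]
  have za : ∀ w, a * (z * w) = z * (a * w) := fun w => by rw [← mul_assoc, hza, mul_assoc]
  have zb : ∀ w, b * (z * w) = z * (b * w) := fun w => by rw [← mul_assoc, hzb, mul_assoc]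
  have haba : a * (b * a) = z * b⁻¹ := by rw [hz]; group
  have hbab : b * (a * b) = z * a⁻¹ := by rw [hz, hab]; group
  have A : ∀ i, a * E i = E (pp i) * a := by
    intro i
    fin_cases i
    · change a * E 0 = E 0 * a
      rw [E0]
    · change a * E 1 = E 3 * a
      rw [E1, E3, za, pow_two, mul_assoc, mul_assoc, mul_right_inj, ← mul_assoc z, ← haba,
        hai]
      rw [pow_two]; simp only [mul_assoc]
    · change a * E 2 = E 1 * a
      rw [E1, E2, za]; group
    · change a * E 3 = E 2 * a
      rw [E3, E2, pow_two, mul_assoc, za, mul_assoc, mul_right_inj, za, ]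
      have : z * (a * b⁻¹) = a * (z * b⁻¹) := (za _).symm
      rw [this, ← haba, ← mul_assoc, ← pow_two, hai, mul_assoc]
  have B : ∀ i, b * E i = E (qq i) * b := by
    intro i
    fin_cases i
    · change b * E 0 = E 2 * b
      rw [E0, E2, ← mul_assoc, ← hbab]
      have : b * b * b = 1 := by rw [← hb, pow_succ, pow_two]
      calc b * a = b * a * (b * b * b) := by rw [this, mul_one]
        _ = _ := by group
    · change b * E 1 = E 0 * b
      rw [E1, E0, zb]
      have : z * (b * (b * a⁻¹)) = b * (b * (z * a⁻¹)) := by rw [zb, zb]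
      rw [this, ← hbab]
      have : b * b * b = 1 := by rw [← hb, pow_succ, pow_two]
      calc b * (b * (b * (a * b))) = (b * b * b) * (a * b) := by group
        _ = _ := by rw [this, one_mul]
    · change b * E 2 = E 1 * b
      rw [E2, E1, zb]; group
    · change b * E 3 = E 3 * b
      rw [E3, pow_two, mul_assoc, zb, zb]; group
  have H : ∀ g : G, ∀ i, g * E i = E (φ g i) * g := by
    intro g
    have hg : g ∈ Subgroup.closure {a, b} := by rw [hgen]; trivial
    induction hg using Subgroup.closure_induction with
    | mem x hx =>
      rcases hx with rfl | rfl
      · rw [hpa]; exact A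
      · rw [hpb]; exact B
    | one => simp
    | mul x y _ _ hx hy =>
      intro i
      rw [mul_assoc, hy, ← mul_assoc, hx, mul_assoc, map_mul, Equiv.Perm.mul_apply]
    | inv x _ hx =>
      intro i
      have := hx (φ x⁻¹ i)
      rw [← Equiv.Perm.mul_apply, ← map_mul, mul_inv_cancel, map_one, Equiv.Perm.one_apply] at this
      rw [eq_mul_inv_iff_mul_eq, mul_assoc, ← this, inv_mul_cancel_left]
  have hcj : ∀ g i, IsConj (E i) (E (φ g i)) := by
    intro g i
    rw [isConj_iff]
    exact ⟨g, by rw [H, mul_inv_cancel_right]⟩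
  have hcl : ∀ t, IsConj a t ↔ ∃ i, t = E i := by
    intro t
    constructor
    · intro h
      obtain ⟨c, rfl⟩ := isConj_iff.1 h
      refine ⟨φ c 0, ?_⟩
      rw [← E0, H, mul_inv_cancel_right]
    · rintro ⟨i, rfl⟩
      have k2 : IsConj (E 0) (E 2) := by
        have := hcj b 0
        rwa [hpb, show qq 0 = 2 by decide +kernel] at this
      have k1 : IsConj (E 2) (E 1) := by
        have := hcj b 2
        rwa [hpb, show qq 2 = 1 by decide +kernel] at this
      have k3 : IsConj (E 1) (E 3) := by
        have := hcj a 1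
        rwa [hpa, show pp 1 = 3 by decide +kernel] at this
      rw [← E0]
      fin_cases i
      · exact IsConj.refl _
      · exact k2.trans k1
      · exact k2
      · exact (k2.trans k1).trans k3
  have hcube : ∀ i, E i ^ 3 = 1 := by
    intro i
    obtain ⟨c, hc⟩ := isConj_iff.1 ((hcl (E i)).2 ⟨i, rfl⟩)
    rw [← hc, conj_pow, ha]; simp
  have hinv : ∀ i, E i ^ 2 = (E i)⁻¹ := by
    intro i
    rw [eq_inv_iff_mul_eq_one, ← pow_succ, hcube]
  have hsqsq : ∀ i, (E i ^ 2) ^ 2 = E i := by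
    intro i
    rw [hinv, inv_pow, hinv, inv_inv]
  have hcl2 : ∀ i, IsConj (a ^ 2) (E i ^ 2) := fun i => ((hcl _).2 ⟨i, rfl⟩).pow 2
  have hinj : ∀ i j, i ≠ j → E i ≠ E j := by
    intro i j h e
    exact h (sg_inj i j (by rw [← hφE, ← hφE, e]))
  have hinj2 : ∀ i j, i ≠ j → E i ^ 2 ≠ E j ^ 2 := by
    intro i j h e
    rw [hinv, hinv, _root_.inv_inj] at e
    exact hinj i j h e
  have hsq : ∀ i j, E i ≠ E j ^ 2 := by
    intro i j e
    exact sg_sq i j (by rw [← hφE, ← hφE, e, map_pow])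
  obtain ⟨i, rfl⟩ := (hcl _).1 h₁
  obtain ⟨j, rfl⟩ : ∃ j, t₃ = E j ^ 2 := by
    obtain ⟨c, rfl⟩ := isConj_iff.1 h₃
    obtain ⟨j, hj⟩ := (hcl (c * a * c⁻¹)).1 (isConj_iff.2 ⟨c, rfl⟩)
    exact ⟨j, by rw [← hj, conj_pow]⟩
  rw [hsqsq] at hne
  have hij : i ≠ j := fun e => hne (by rw [e])
  obtain ⟨k, l, e1, e2, e3, e4, hik, hjl, hall⟩ := sg_tab i j hij
  have T : ∀ x y w, sg x y = w → E x * E y = E w * E x := by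
    intro x y w h
    rw [H, hφE, h]
  have T1 := T _ _ _ e1
  have T2 := T _ _ _ e2
  have T3 := T _ _ _ e3
  have T4 := T _ _ _ e4
  have horb := orb4 (E i) (E j ^ 2) (E k) (E l ^ 2)
    (by rw [hinv, eq_inv_mul_iff_mul_eq, ← mul_assoc, T1, mul_inv_cancel_right])
    (by rw [hinv, hinv, inv_mul_eq_iff_eq_mul, ← mul_assoc, ← T2, mul_inv_cancel_right])
    (by rw [hinv, eq_inv_mul_iff_mul_eq, ← mul_assoc, T3, mul_inv_cancel_right])
    (by rw [hinv, hinv, inv_mul_eq_iff_eq_mul, ← mul_assoc, ← T4, mul_inv_cancel_right])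
  have vne : ∀ p q r s : G, p ≠ r → ![p, q] ≠ ![r, s] := by
    intro p q r s h e
    exact h (congrFun e 0)
  refine ⟨?_, E k, E l ^ 2, (hcl _).2 ⟨k, rfl⟩, hcl2 l, ?_, ?_, ?_⟩
  · rw [horb]
    exact ncard4 _ _ _ _ (vne _ _ _ _ (hsq i j)) (vne _ _ _ _ (hinj i k hik))
      (vne _ _ _ _ (hsq i l)) (vne _ _ _ _ (hsq k j).symm) (vne _ _ _ _ (hinj2 j l hjl))
      (vne _ _ _ _ (hsq k l))
  · have ho : ∀ s, SameHurwitzOrbit ![E i, E j ^ 2] s ↔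
        s ∈ ({![E i, E j ^ 2], ![E j ^ 2, E k], ![E k, E l ^ 2], ![E l ^ 2, E i]} :
          Set (Fin 2 → G)) := by
      intro s; rw [← horb]; rfl
    ext r
    simp only [Appears, ho, Set.mem_ofPred_eq, Set.mem_insert_iff, Set.mem_singleton_iff,
      Fin.exists_fin_two]
    constructor
    · rintro ⟨s, (rfl | rfl | rfl | rfl), h⟩ <;> simp at h <;> rcases h with rfl | rfl <;> simp
    · rintro (rfl | rfl | rfl | rfl)
      · exact ⟨_, Or.inl rfl, by simp⟩
      · exact ⟨_, Or.inr (Or.inl rfl), by simp⟩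
      · exact ⟨_, Or.inl rfl, by simp⟩
      · exact ⟨_, Or.inr (Or.inr (Or.inl rfl)), by simp⟩
  · exact ncard4 _ _ _ _ (hinj i k hik) (hsq i j) (hsq i l) (hsq k j) (hsq k l) (hinj2 j l hjl)
  · rw [hsqsq, hsqsq]
    ext t
    simp only [Set.mem_ofPred_eq, hcl, Set.mem_insert_iff, Set.mem_singleton_iff]
    constructor
    · rintro ⟨x, rfl⟩
      rcases hall x with rfl | rfl | rfl | rfl <;> simp
    · rintro (rfl | rfl | rfl | rfl) <;> exact ⟨_, rfl⟩

theorem ga3 : ga ^ 3 = 1 :=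
  (PresentedGroup.one_of_mem (rels := g5Rels) (x := FreeGroup.of 0 ^ 3) (by simp [g5Rels]))

theorem gb3 : gb ^ 3 = 1 :=
  (PresentedGroup.one_of_mem (rels := g5Rels) (x := FreeGroup.of 1 ^ 3) (by simp [g5Rels]))

theorem gab : ga * gb * ga * gb = gb * ga * gb * ga := by
  have := PresentedGroup.one_of_mem (rels := g5Rels)
    (x := FreeGroup.of 0 * FreeGroup.of 1 * FreeGroup.of 0 * FreeGroup.of 1 *
      (FreeGroup.of 1 * FreeGroup.of 0 * FreeGroup.of 1 * FreeGroup.of 0)⁻¹) (by simp [g5Rels])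
  exact mul_inv_eq_one.1 this

theorem ggen : Subgroup.closure {ga, gb} = ⊤ := by
  rw [← PresentedGroup.closure_range_of g5Rels]
  congr 1
  ext x
  simp only [Set.mem_insert_iff, Set.mem_singleton_iff, Set.mem_range, Fin.exists_fin_two, ga, gb,
    eq_comm]

theorem ghom (p q : Equiv.Perm (Fin 4)) (hp : p ^ 3 = 1) (hq : q ^ 3 = 1)
    (hpq : p * q * p * q = q * p * q * p) :
    ∃ φ : G5 →* Equiv.Perm (Fin 4), φ ga = p ∧ φ gb = q := by
  have h : ∀ r ∈ g5Rels, FreeGroup.lift ![p, q] r = 1 := by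
    rintro r (rfl | rfl | rfl)
    · simpa using hp
    · simpa using hq
    · simp only [map_mul, map_inv, FreeGroup.lift_apply_of]
      exact mul_inv_eq_one.2 hpq
  refine ⟨PresentedGroup.toGroup h, ?_, ?_⟩
  · exact PresentedGroup.toGroup.of h
  · exact PresentedGroup.toGroup.of h

theorem g5_square_classes_pair_orbit (Ri Rj : Set G5)
    (h : (Ri = S1 ∧ Rj = S3) ∨ (Ri = S2 ∧ Rj = S4))
    (t₁ t₃ : G5) (h₁ : t₁ ∈ Ri) (h₃ : t₃ ∈ Rj) (hne : t₁ ≠ t₃ ^ 2) :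
    {s : Fin 2 → G5 | SameHurwitzOrbit ![t₁, t₃] s}.ncard = 4 ∧
    ∃ t₂ t₄ : G5, t₂ ∈ Ri ∧ t₄ ∈ Rj ∧
      {r : G5 | Appears r ![t₁, t₃]} = {t₁, t₂, t₃, t₄} ∧
      ({t₁, t₂, t₃, t₄} : Set G5).ncard = 4 ∧
      Ri = {t₁, t₂, t₃ ^ 2, t₄ ^ 2} := by
  rcases h with ⟨rfl, rfl⟩ | ⟨rfl, rfl⟩
  · obtain ⟨φ, h1, h2⟩ := ghom pp qq (by decide +kernel) (by decide +kernel) (by decide +kernel)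
    exact core ga gb ga3 gb3 gab φ h1 h2 ggen t₁ t₃ h₁ h₃ hne
  · obtain ⟨φ, h1, h2⟩ := ghom qq pp (by decide +kernel) (by decide +kernel) (by decide +kernel)
    exact core gb ga gb3 ga3 gab.symm φ h2 h1 (by rw [Set.pair_comm]; exact ggen) t₁ t₃ h₁ h₃ hne
end
end

section
/- Every tuple of reflections of G5 that contains at least three entries from a single conjugacy class R_i and at least two further entries (from any combination of conjugacy classes) has, in its Hurwitz orbit, a tuple with two consecutive equal entries both lying in R_i. -/
noncomputable section

open Matrix Complex

namespace G5Proof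

def gz : G5 := ga * gb * ga * gb

theorem rel_a : ga * ga * ga = 1 := by
  have h : (PresentedGroup.mk g5Rels) (FreeGroup.of 0 ^ 3) = 1 :=
    PresentedGroup.one_of_mem (by simp [g5Rels])
  rw [map_pow] at h
  have h2 : ga ^ 3 = 1 := h
  simpa [pow_succ] using h2

theorem rel_b : gb * gb * gb = 1 := by
  have h : (PresentedGroup.mk g5Rels) (FreeGroup.of 1 ^ 3) = 1 :=
    PresentedGroup.one_of_mem (by simp [g5Rels])
  rw [map_pow] at h
  have h2 : gb ^ 3 = 1 := h
  simpa [pow_succ] using h2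

theorem rel_ab : ga * gb * ga * gb = gb * ga * gb * ga := by
  have h : (PresentedGroup.mk g5Rels) (FreeGroup.of 0 * FreeGroup.of 1 * FreeGroup.of 0 *
      FreeGroup.of 1 * (FreeGroup.of 1 * FreeGroup.of 0 * FreeGroup.of 1 *
      FreeGroup.of 0)⁻¹) = 1 :=
    PresentedGroup.one_of_mem (by simp [g5Rels])
  simp only [map_mul, map_inv] at h
  exact mul_inv_eq_one.mp h

/-- Induction principle for G5. -/
theorem g5_ind {P : G5 → Prop} (h1 : P 1) (ha : P ga) (hb : P gb)
    (hm : ∀ x y, P x → P y → P (x * y)) (hi : ∀ x, P x → P x⁻¹) (g : G5) : P g := by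
  have hg : g ∈ Subgroup.closure (Set.range (PresentedGroup.of : Fin 2 → G5)) := by
    rw [PresentedGroup.closure_range_of]; trivial
  induction hg using Subgroup.closure_induction with
  | mem x hx =>
    obtain ⟨i, rfl⟩ := hx
    fin_cases i
    · exact ha
    · exact hb
  | one => exact h1
  | mul x y _ _ hx hy => exact hm x y hx hy
  | inv x _ hx => exact hi x hx

theorem z_comm (g : G5) : Commute gz g := by
  induction g using g5_ind with
  | h1 => exact Commute.one_right _
  | ha =>
    show ga * gb * ga * gb * ga = ga * (ga * gb * ga * gb)
    conv_rhs => rw [rel_ab]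
    simp only [mul_assoc]
  | hb =>
    show ga * gb * ga * gb * gb = gb * (ga * gb * ga * gb)
    conv_lhs => rw [rel_ab]
    simp only [mul_assoc]
  | hm x y hx hy => exact hx.mul_right hy
  | hi x hx => exact hx.inv_right

inductive P4 where
  | p0 | p1 | p2 | p3

open P4

def A : P4 → G5
  | p0 => ga
  | p1 => gb⁻¹ * ga * gb
  | p2 => gb * ga * gb⁻¹
  | p3 => gz * gz * gb⁻¹

def ra : P4 → P4
  | p0 => p0 | p1 => p2 | p2 => p3 | p3 => p1
def ra' : P4 → P4
  | p0 => p0 | p1 => p3 | p2 => p1 | p3 => p2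
def rb : P4 → P4
  | p0 => p1 | p1 => p2 | p2 => p0 | p3 => p3
def rb' : P4 → P4
  | p0 => p2 | p1 => p0 | p2 => p1 | p3 => p3

def rot : P4 → P4 → P4
  | p0, p => ra p
  | p1, p => rb (ra (rb' p))
  | p2, p => rb' (ra (rb p))
  | p3, p => rb' p

def rot' : P4 → P4 → P4
  | p0, p => ra' p
  | p1, p => rb (ra' (rb' p))
  | p2, p => rb' (ra' (rb p))
  | p3, p => rb p

theorem binv : gb⁻¹ = gb * gb := by
  rw [inv_eq_iff_mul_eq_one, ← mul_assoc]; exact rel_b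
theorem ainv : ga⁻¹ = ga * ga := by
  rw [inv_eq_iff_mul_eq_one, ← mul_assoc]; exact rel_a

theorem za : gz * ga⁻¹ = gb * ga * gb := by
  rw [gz, rel_ab]; group
theorem zb : gz * gb⁻¹ = ga * gb * ga := by
  rw [gz]; group

theorem A1 : A p1 = gz * gb * ga⁻¹ := by
  show gb⁻¹ * ga * gb = _
  rw [(z_comm gb).eq, mul_assoc gb, za, binv]; simp only [mul_assoc]
theorem A2 : A p2 = gz * ga⁻¹ * gb := by
  show gb * ga * gb⁻¹ = _
  rw [za, binv]; simp only [mul_assoc]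

theorem sa (p : P4) : SemiconjBy ga (A (ra p)) (A p) := by
  unfold SemiconjBy
  cases p
  · rfl
  · show ga * A p2 = A p1 * ga
    rw [A1, A2, ← mul_assoc, ← mul_assoc, ← (z_comm ga).eq]; group
  · show ga * A p3 = A p2 * ga
    show ga * (gz * gz * gb⁻¹) = _
    rw [A2, mul_assoc gz gz, zb, ← mul_assoc, ← (z_comm ga).eq, ainv]; simp only [mul_assoc]
  · show ga * A p1 = A p3 * ga
    show _ = gz * gz * gb⁻¹ * ga
    rw [A1, mul_assoc gz gz, zb, ← mul_assoc, ← mul_assoc, ← (z_comm ga).eq, ainv]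
    simp only [mul_assoc]

theorem sb (p : P4) : SemiconjBy gb (A (rb p)) (A p) := by
  unfold SemiconjBy
  cases p
  · show gb * (gb⁻¹ * ga * gb) = ga * gb
    group
  · show gb * A p2 = A p1 * gb
    show gb * (gb * ga * gb⁻¹) = gb⁻¹ * ga * gb * gb
    have : gb * (gb * ga * gb⁻¹) = (gb * gb) * ga * gb⁻¹ := by group
    rw [this, ← binv, mul_assoc (_ * _) gb gb, ← binv]
  · show gb * ga = gb * ga * gb⁻¹ * gb
    group
  · show gb * (gz * gz * gb⁻¹) = gz * gz * gb⁻¹ * gb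
    have := ((z_comm gb).mul_left (z_comm gb)).eq
    rw [← mul_assoc, ← this]; group

theorem sa' (p : P4) : SemiconjBy ga⁻¹ (A (ra' p)) (A p) := by
  have h := (sa (ra' p)).inv_symm_left
  cases p <;> exact h
theorem sb' (p : P4) : SemiconjBy gb⁻¹ (A (rb' p)) (A p) := by
  have h := (sb (rb' p)).inv_symm_left
  cases p <;> exact h

theorem zs (x : G5) : SemiconjBy (gz * gz) x x := (z_comm x).mul_left (z_comm x)

theorem sA (q p : P4) : SemiconjBy (A q) (A (rot q p)) (A p) := by
  cases q
  · exact sa p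
  · exact ((sb' p).mul_left (sa _)).mul_left (sb _)
  · exact ((sb p).mul_left (sa _)).mul_left (sb' _)
  · exact (zs _).mul_left (sb' p)

theorem sA' (q p : P4) : SemiconjBy (A q)⁻¹ (A (rot' q p)) (A p) := by
  have h := (sA q (rot' q p)).inv_symm_left
  cases q <;> cases p <;> exact h

/-- labels : central factor and sign. -/
inductive Lb where
  | l1 | l2 | l3 | l4

open Lb

def sg : Lb → Bool
  | l1 => false | l2 => true | l3 => true | l4 => false

def ze : Lb → G5
  | l1 => 1 | l2 => gz * gz | l3 => 1 | l4 => (gz * gz)⁻¹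

theorem ze_comm (m : Lb) (g : G5) : Commute (ze m) g := by
  cases m
  · exact Commute.one_left _
  · exact zs g
  · exact Commute.one_left _
  · exact Commute.inv_left (zs g)

def sA2 (s : Bool) (p : P4) : G5 := match s with
  | false => A p
  | true => (A p)⁻¹

def E (m : Lb) (p : P4) : G5 := ze m * sA2 (sg m) p

def rt (s : Bool) (q p : P4) : P4 := match s with
  | false => rot q p
  | true => rot' q p

theorem E_of_A {g : G5} {p p' : P4} (m : Lb) (h : SemiconjBy g (A p') (A p)) :
    SemiconjBy g (E m p') (E m p) := by
  unfold E
  refine SemiconjBy.mul_right (ze_comm m g).symm ?_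
  cases sg m
  · exact h
  · exact h.inv_right

theorem E_conj (m n : Lb) (q p : P4) : SemiconjBy (E m q) (E n (rt (sg m) q p)) (E n p) := by
  refine SemiconjBy.mul_left (ze_comm m _) ?_
  apply E_of_A
  cases sg m
  · exact sA q p
  · exact sA' q p

theorem conj_cl (g : G5) : (∀ p, ∃ p', SemiconjBy g (A p) (A p')) ∧
    (∀ p, ∃ p', SemiconjBy g⁻¹ (A p) (A p')) := by
  induction g using g5_ind with
  | h1 => exact ⟨fun p => ⟨p, SemiconjBy.one_left _⟩, fun p => ⟨p, by simp⟩⟩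
  | ha => exact ⟨fun p => ⟨_, (sa' p).inv_symm_left |> fun h => by simpa using h⟩,
      fun p => ⟨_, (sa p).inv_symm_left⟩⟩
  | hb => exact ⟨fun p => ⟨_, (sb' p).inv_symm_left |> fun h => by simpa using h⟩,
      fun p => ⟨_, (sb p).inv_symm_left⟩⟩
  | hm x y hx hy =>
    constructor
    · intro p
      obtain ⟨u1, h1⟩ := hy.1 p
      obtain ⟨u2, h2⟩ := hx.1 u1
      exact ⟨u2, h2.mul_left h1⟩
    · intro p
      obtain ⟨u1, h1⟩ := hx.2 p
      obtain ⟨u2, h2⟩ := hy.2 u1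
      exact ⟨u2, by rw [_root_.mul_inv_rev]; exact h2.mul_left h1⟩
  | hi x hx => exact ⟨hx.2, by simpa using hx.1⟩

theorem trans4 (p p' : P4) : ∃ s q, rt s q p = p' := by
  cases p <;> cases p' <;>
  first
    | exact ⟨false, p0, rfl⟩ | exact ⟨false, p1, rfl⟩ | exact ⟨false, p2, rfl⟩
    | exact ⟨false, p3, rfl⟩

def Cl (m : Lb) : Set G5 := {t | ∃ p, t = E m p}

theorem cls (m : Lb) (p : P4) : {t | IsConj (E m p) t} = Cl m := by
  ext t
  constructor
  · intro h
    obtain ⟨c, hc⟩ := isConj_iff.mp h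
    obtain ⟨p', h'⟩ := (conj_cl c).1 p
    refine ⟨p', ?_⟩
    have := (E_of_A m h').eq
    rw [← hc, this]; group
  · rintro ⟨p', rfl⟩
    obtain ⟨s, q, rfl⟩ := trans4 p p'
    refine IsConj.symm (isConj_iff.mpr ?_)
    have : ∃ n, sg n = s := by
      cases s
      · exact ⟨l1, rfl⟩
      · exact ⟨l2, rfl⟩
    obtain ⟨n, rfl⟩ := this
    refine ⟨E n q, ?_⟩
    rw [(E_conj n m q p).eq]; group

theorem S1_eq : S1 = Cl l1 := by
  rw [← cls l1 p0]
  have : E l1 p0 = ga := one_mul _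
  rw [this]; rfl
theorem S2_eq : S2 = Cl l2 := by
  rw [← cls l2 p3]
  have : E l2 p3 = gb := by
    show gz * gz * (gz * gz * gb⁻¹)⁻¹ = gb
    rw [_root_.mul_inv_rev, inv_inv, ← mul_assoc, (zs gb).eq]; group
  rw [this]; rfl
theorem S3_eq : S3 = Cl l3 := by
  rw [← cls l3 p0]
  have : E l3 p0 = ga ^ 2 := by
    show 1 * ga⁻¹ = _
    rw [ainv, one_mul, pow_two]
  rw [this]; rfl
theorem S4_eq : S4 = Cl l4 := by
  rw [← cls l4 p3]
  have : E l4 p3 = gb ^ 2 := by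
    show (gz * gz)⁻¹ * (gz * gz * gb⁻¹) = _
    rw [inv_mul_cancel_left, binv, pow_two]
  rw [this]; rfl

/-! Hurwitz moves on lists -/

inductive LM : List G5 → List G5 → Prop
  | mk (l1 l2 : List G5) (x y : G5) :
      LM (l1 ++ x :: y :: l2) (l1 ++ y :: (y⁻¹ * x * y) :: l2)

def LH := Relation.EqvGen LM

theorem LM.cons {L L' : List G5} (a : G5) (h : LM L L') : LM (a :: L) (a :: L') := by
  cases h with
  | mk l1 l2 x y => exact LM.mk (a :: l1) l2 x y

theorem LH.cons {L L' : List G5} (a : G5) (h : LH L L') : LH (a :: L) (a :: L') := by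
  induction h with
  | rel _ _ h => exact .rel _ _ (h.cons a)
  | refl => exact .refl _
  | symm _ _ _ ih => exact .symm _ _ ih
  | trans _ _ _ _ _ i1 i2 => exact .trans _ _ _ i1 i2

theorem LM.app {L L' : List G5} (a : List G5) (h : LM L L') : LM (L ++ a) (L' ++ a) := by
  cases h with
  | mk l1 l2 x y => simpa using LM.mk l1 (l2 ++ a) x y

theorem LH.app {L L' : List G5} (a : List G5) (h : LH L L') : LH (L ++ a) (L' ++ a) := by
  induction h with
  | rel _ _ h => exact .rel _ _ (h.app a)
  | refl => exact .refl _
  | symm _ _ _ ih => exact .symm _ _ ih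
  | trans _ _ _ _ _ i1 i2 => exact .trans _ _ _ i1 i2

theorem LM.len {L L' : List G5} (h : LM L L') : L.length = L'.length := by
  cases h; simp

theorem LH.len {L L' : List G5} (h : LH L L') : L.length = L'.length := by
  induction h with
  | rel _ _ h => exact h.len
  | refl => rfl
  | symm _ _ _ ih => exact ih.symm
  | trans _ _ _ _ _ i1 i2 => exact i1.trans i2

theorem LH.toOrbit {L L' : List G5} (h : LH L L') (k : ℕ) (hk : L.length = k)
    (hk' : L'.length = k) :
    SameHurwitzOrbit (fun i : Fin k => L[(i : ℕ)]'(by omega))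
      (fun i : Fin k => L'[(i : ℕ)]'(by omega)) := by
  induction h with
  | rel _ _ h =>
    apply Relation.EqvGen.rel
    cases h with
    | mk l1 l2 x y =>
      simp at hk
      refine ⟨l1.length, by omega, ?_, ?_, ?_⟩
      · simp
      · simp
      · intro j h1 h2
        show (l1 ++ y :: (y⁻¹ * x * y) :: l2)[(j : ℕ)] = (l1 ++ x :: y :: l2)[(j : ℕ)]
        rcases Nat.lt_or_ge (j : ℕ) l1.length with h | h
        · rw [List.getElem_append_left h, List.getElem_append_left h]
        · rw [List.getElem_append_right h, List.getElem_append_right h]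
          obtain ⟨d, hd⟩ : ∃ d, (j : ℕ) - l1.length = d + 2 :=
            ⟨(j : ℕ) - l1.length - 2, by omega⟩
          simp [hd]
  | refl => exact .refl _
  | symm x y h ih => exact .symm _ _ (ih hk' hk)
  | trans x y z h1 h2 i1 i2 =>
    have := LH.len h1
    exact .trans _ _ _ (i1 hk (by omega)) (i2 (by omega) hk')

/-! Moving entries to the front -/

theorem pull (x : G5) (l1 l2 : List G5) :
    LH (l1 ++ x :: l2) (x :: (l1.map (fun y => x⁻¹ * y * x) ++ l2)) := by
  induction l1 with
  | nil => exact .refl _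
  | cons y l ih =>
    refine .trans _ _ _ (LH.cons y ih) ?_
    exact .rel _ _ (LM.mk [] _ y x)

open Classical in
theorem pull_count (m : Lb) (n : ℕ) (L : List G5)
    (hr : ∀ g ∈ L, ∃ m' p, g = E m' p) (hc : n + 1 ≤ L.countP (fun g => decide (g ∈ Cl m))) :
    ∃ x ∈ Cl m, ∃ L', LH L (x :: L') ∧ (∀ g ∈ L', ∃ m' p, g = E m' p) ∧
      n ≤ L'.countP (fun g => decide (g ∈ Cl m)) := by
  have hpos : 0 < L.countP (fun g => decide (g ∈ Cl m)) := by omega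
  obtain ⟨x, hx, hxm⟩ := List.countP_pos_iff.mp hpos
  have hxm : x ∈ Cl m := by simpa using hxm
  obtain ⟨l1, l2, rfl⟩ := List.append_of_mem hx
  refine ⟨x, hxm, _, pull x l1 l2, ?_, ?_⟩
  · intro g hg
    rcases List.mem_append.mp hg with h | h
    · obtain ⟨y, hy, rfl⟩ := List.mem_map.mp h
      obtain ⟨m', p, rfl⟩ := hr y (by simp [hy])
      obtain ⟨q, rfl⟩ := hxm
      refine ⟨m', rt (sg m) q p, ?_⟩
      rw [mul_assoc, ← (E_conj m m' q p).eq, inv_mul_cancel_left]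
    · exact hr g (by simp [h])
  · rw [List.countP_append, List.countP_cons] at hc
    simp only [hxm, decide_true, if_true] at hc
    rw [List.countP_append, List.countP_map]
    have : l1.countP (fun g => decide (g ∈ Cl m)) ≤
        l1.countP ((fun g => decide (g ∈ Cl m)) ∘ (fun y => x⁻¹ * y * x)) := by
      apply List.countP_mono_left
      intro y _ hy
      have hy : y ∈ Cl m := by simpa using hy
      obtain ⟨p, rfl⟩ := hy
      obtain ⟨q, rfl⟩ := hxm
      simp only [Function.comp, decide_eq_true_eq]
      refine ⟨rt (sg m) q p, ?_⟩
      rw [mul_assoc, ← (E_conj m m q p).eq, inv_mul_cancel_left]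
    omega

/-! The finite search -/

structure Ent where
  s : Bool
  p : P4
  r : Bool

def mv : Bool → ℕ → List Ent → List Ent
  | false, 0, x :: y :: l => y :: ⟨x.s, rt y.s y.p x.p, x.r⟩ :: l
  | true, 0, x :: y :: l => ⟨y.s, rt (!x.s) x.p y.p, y.r⟩ :: x :: l
  | v, n + 1, x :: l => x :: mv v n l
  | _, _, l => l

def eqb : P4 → P4 → Bool
  | p0, p0 => true
  | p1, p1 => true
  | p2, p2 => true
  | p3, p3 => true
  | _, _ => false

theorem eqb_eq {p q : P4} (h : eqb p q = true) : p = q := by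
  cases p <;> cases q <;> first | rfl | exact absurd h (by decide)

def good : List Ent → Bool
  | x :: y :: l => (x.r && y.r && eqb x.p y.p) || good (y :: l)
  | _ => false

def run : List (Bool × ℕ) → List Ent → Bool
  | [], l => good l
  | w :: ws, l => good l || run ws (mv w.1 w.2 l)

def rep (m : Lb) (e : Ent) (g : G5) : Prop :=
  ∃ n, sg n = e.s ∧ (e.r = true → n = m) ∧ g = E n e.p

theorem mv_sound (m : Lb) (v : Bool) (n : ℕ) (es : List Ent) (gs : List G5)
    (h : List.Forall₂ (rep m) es gs) :
    ∃ gs', LH gs gs' ∧ List.Forall₂ (rep m) (mv v n es) gs' := by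
  induction n generalizing es gs with
  | zero =>
    cases h with
    | nil => exact ⟨[], .refl _, by cases v <;> exact .nil⟩
    | @cons x g1 _ _ hx h =>
      cases h with
      | nil => exact ⟨_, .refl _, by cases v <;> exact .cons hx .nil⟩
      | @cons y g2 _ l2 hy h =>
        cases v
        · refine ⟨_, .rel _ _ (LM.mk [] _ _ _), .cons hy (.cons ?_ h)⟩
          obtain ⟨n1, h1, h2, rfl⟩ := hx
          obtain ⟨n2, h3, h4, rfl⟩ := hy
          refine ⟨n1, h1, h2, ?_⟩
          rw [mul_assoc, ← (E_conj n2 n1 _ _).eq, inv_mul_cancel_left, h3]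
        · refine ⟨(g1 * g2 * g1⁻¹) :: g1 :: _, .symm _ _ (.rel _ _ ?_), .cons ?_ (.cons hx h)⟩
          · have := LM.mk [] l2 (g1 * g2 * g1⁻¹) g1
            have e : g1⁻¹ * (g1 * g2 * g1⁻¹) * g1 = g2 := by group
            rw [e] at this
            exact this
          · obtain ⟨n1, h1, h2, rfl⟩ := hx
            obtain ⟨n2, h3, h4, rfl⟩ := hy
            refine ⟨n2, h3, h4, ?_⟩
            rw [mul_inv_eq_iff_eq_mul]
            rw [← h1]
            have hinv : ∀ s q p, rt s q (rt (!s) q p) = p := by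
              intro s q p
              cases s <;> cases q <;> cases p <;> rfl
            have h5 := (E_conj n1 n2 x.p (rt (!(sg n1)) x.p y.p)).eq
            rw [hinv] at h5
            exact h5
  | succ n ih =>
    cases h with
    | nil => exact ⟨[], .refl _, by cases v <;> exact .nil⟩
    | cons hx h =>
      obtain ⟨gs', h1, h2⟩ := ih _ _ h
      exact ⟨_, h1.cons _, by cases v <;> exact .cons hx h2⟩

theorem good_sound (m : Lb) (es : List Ent) (gs : List G5)
    (h : List.Forall₂ (rep m) es gs) (hg : good es = true) :
    ∃ l1 x l2, gs = l1 ++ x :: x :: l2 ∧ x ∈ Cl m := by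
  induction h with
  | nil => exact absurd hg (by simp [good])
  | cons hx h ih =>
    cases h with
    | nil => exact absurd hg (by simp [good])
    | cons hy h =>
      simp only [good, Bool.or_eq_true, Bool.and_eq_true] at hg
      rcases hg with ⟨⟨h1, h2⟩, h3⟩ | hg
      · obtain ⟨n1, _, h5, rfl⟩ := hx
        obtain ⟨n2, _, h6, rfl⟩ := hy
        rw [h5 h1, h6 h2, eqb_eq h3]
        exact ⟨[], _, _, rfl, _, rfl⟩
      · obtain ⟨l1, x, l2, h1, h2⟩ := ih hg
        exact ⟨_ :: l1, x, l2, by rw [h1]; rfl, h2⟩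

theorem run_sound (m : Lb) (ws : List (Bool × ℕ)) (es : List Ent) (gs : List G5)
    (h : List.Forall₂ (rep m) es gs) (hg : run ws es = true) :
    ∃ l1 x l2, LH gs (l1 ++ x :: x :: l2) ∧ x ∈ Cl m := by
  induction ws generalizing es gs with
  | nil =>
    obtain ⟨l1, x, l2, rfl, h2⟩ := good_sound m es gs h hg
    exact ⟨l1, x, l2, .refl _, h2⟩
  | cons w ws ih =>
    simp only [run, Bool.or_eq_true] at hg
    rcases hg with hg | hg
    · obtain ⟨l1, x, l2, rfl, h2⟩ := good_sound m es gs h hg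
      exact ⟨l1, x, l2, .refl _, h2⟩
    · obtain ⟨gs', h1, h2⟩ := mv_sound m w.1 w.2 es gs h
      obtain ⟨l1, x, l2, h3, h4⟩ := ih _ _ h2 hg
      exact ⟨l1, x, l2, .trans _ _ _ h1 h3, h4⟩

def tst (s t u : Bool) (a b c d e : P4) : Bool :=
  let es : List Ent := [⟨s, a, true⟩, ⟨s, b, true⟩, ⟨s, c, true⟩, ⟨t, d, false⟩, ⟨u, e, false⟩]
  run [(false, 1), (true, 2), (false, 1)] es ||
  run [(false, 0), (false, 2), (true, 1)] es ||
  run [(false, 2), (false, 1), (true, 0)] es ||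
  run [(true, 0), (false, 2), (true, 1)] es

def allP (f : P4 → Bool) : Bool := f p0 && f p1 && f p2 && f p3
def allB (f : Bool → Bool) : Bool := f false && f true

theorem allP_spec {f : P4 → Bool} (h : allP f = true) (p : P4) : f p = true := by
  simp only [allP, Bool.and_eq_true] at h
  cases p <;> simp [h]
theorem allB_spec {f : Bool → Bool} (h : allB f = true) (p : Bool) : f p = true := by
  simp only [allB, Bool.and_eq_true] at h
  cases p <;> simp [h]

theorem big : allB (fun s => allB fun t => allB fun u => allP fun a => allP fun b => allP fun c =>
    allP fun d => allP fun e => tst s t u a b c d e) = true := by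
  decide +kernel

theorem tst_true (s t u : Bool) (a b c d e : P4) : tst s t u a b c d e = true :=
  allP_spec (allP_spec (allP_spec (allP_spec (allP_spec
    (allB_spec (allB_spec (allB_spec big s) t) u) a) b) c) d) e

theorem five (m n1 n2 : Lb) (a b c d e : P4) :
    ∃ l1 x l2, LH [E m a, E m b, E m c, E n1 d, E n2 e] (l1 ++ x :: x :: l2) ∧ x ∈ Cl m := by
  have h := tst_true (sg m) (sg n1) (sg n2) a b c d e
  have hr : List.Forall₂ (rep m) [⟨sg m, a, true⟩, ⟨sg m, b, true⟩, ⟨sg m, c, true⟩,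
      ⟨sg n1, d, false⟩, ⟨sg n2, e, false⟩] [E m a, E m b, E m c, E n1 d, E n2 e] := by
    refine .cons ⟨m, rfl, fun _ => rfl, rfl⟩ (.cons ⟨m, rfl, fun _ => rfl, rfl⟩
      (.cons ⟨m, rfl, fun _ => rfl, rfl⟩ (.cons ⟨n1, rfl, ?_, rfl⟩
      (.cons ⟨n2, rfl, ?_, rfl⟩ .nil)))) <;> simp
  simp only [tst, Bool.or_eq_true] at h
  rcases h with ((h | h) | h) | h <;> exact run_sound m _ _ _ hr h

open Classical in
theorem list_main (m : Lb) (L : List G5) (hr : ∀ g ∈ L, ∃ m' p, g = E m' p)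
    (hl : 5 ≤ L.length) (hc : 3 ≤ L.countP (fun g => decide (g ∈ Cl m))) :
    ∃ l1 x l2, LH L (l1 ++ x :: x :: l2) ∧ x ∈ Cl m := by
  obtain ⟨x, ⟨a, rfl⟩, L1, h1, r1, c1⟩ := pull_count m 2 L hr hc
  obtain ⟨x, ⟨b, rfl⟩, L2, h2, r2, c2⟩ := pull_count m 1 L1 r1 c1
  obtain ⟨x, ⟨c, rfl⟩, L3, h3, r3, c3⟩ := pull_count m 0 L2 r2 c2
  have hh := Relation.EqvGen.trans _ _ _ h1
    (.trans _ _ _ (LH.cons _ h2) (LH.cons _ (LH.cons _ h3)))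
  have hlen := LH.len hh
  match L3, r3, hh, hlen with
  | [], _, _, hlen => simp at hlen; omega
  | [_], _, _, hlen => simp at hlen; omega
  | u :: v :: L4, r3, hh, _ =>
    obtain ⟨n1, d, rfl⟩ := r3 u (by simp)
    obtain ⟨n2, e, rfl⟩ := r3 v (by simp)
    obtain ⟨l1, x, l2, h5, h6⟩ := five m n1 n2 a b c d e
    refine ⟨l1, x, l2 ++ L4, ?_, h6⟩
    have := LH.app L4 h5
    simp only [List.append_assoc, List.cons_append, List.nil_append] at this
    exact .trans _ _ _ hh this

theorem main (m : Lb) (k : ℕ) (hk : 5 ≤ k) (t : Fin k → G5) (ht : ∀ i, IsReflection5 (t i))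
    (h3 : 3 ≤ {i : Fin k | t i ∈ Cl m}.ncard) :
    ∃ s : Fin k → G5, SameHurwitzOrbit t s ∧
      ∃ i : ℕ, ∃ h : i + 1 < k,
        s ⟨i, Nat.lt_of_succ_lt h⟩ = s ⟨i + 1, h⟩ ∧ s ⟨i + 1, h⟩ ∈ Cl m := by
  classical
  have hr : ∀ g ∈ List.ofFn t, ∃ m' p, g = E m' p := by
    intro g hg
    obtain ⟨i, rfl⟩ := (List.mem_ofFn' t g).mp hg
    rcases ht i with h | h | h | h
    · rw [S1_eq] at h; exact ⟨_, h⟩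
    · rw [S2_eq] at h; exact ⟨_, h⟩
    · rw [S3_eq] at h; exact ⟨_, h⟩
    · rw [S4_eq] at h; exact ⟨_, h⟩
  have hc : 3 ≤ (List.ofFn t).countP (fun g => decide (g ∈ Cl m)) := by
    rw [List.ofFn_eq_map, List.countP_map]
    refine h3.trans (le_of_eq ?_)
    rw [Set.ncard_eq_toFinset_card', List.countP_eq_length_filter,
      ← List.toFinset_card_of_nodup ((List.nodup_finRange k).filter _)]
    congr 1
    ext i
    simp
  obtain ⟨l1, x, l2, h, hx⟩ := list_main m (List.ofFn t) hr (by simpa using hk) hc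
  have hlen := LH.len h
  simp only [List.length_ofFn, List.length_append, List.length_cons] at hlen
  have ho := LH.toOrbit h k (by simp) (by simp; omega)
  refine ⟨fun i : Fin k => (l1 ++ x :: x :: l2)[(i : ℕ)]'(by simp; omega), ?_, l1.length,
    by omega, ?_, ?_⟩
  · convert ho using 1
    ext i
    simp
  · simp
  · simpa using hx

end G5Proof

theorem g5_three_plus_two_pair (R : Set G5)
    (hR : R = S1 ∨ R = S2 ∨ R = S3 ∨ R = S4)
    (k : ℕ) (hk : 5 ≤ k) (t : Fin k → G5) (ht : ∀ i, IsReflection5 (t i))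
    (h3 : 3 ≤ {i : Fin k | t i ∈ R}.ncard) :
    ∃ s : Fin k → G5, SameHurwitzOrbit t s ∧
      ∃ i : ℕ, ∃ h : i + 1 < k,
        s ⟨i, Nat.lt_of_succ_lt h⟩ = s ⟨i + 1, h⟩ ∧ s ⟨i + 1, h⟩ ∈ R := by
  rcases hR with rfl | rfl | rfl | rfl
  · rw [G5Proof.S1_eq] at h3 ⊢; exact G5Proof.main _ k hk t ht h3
  · rw [G5Proof.S2_eq] at h3 ⊢; exact G5Proof.main _ k hk t ht h3
  · rw [G5Proof.S3_eq] at h3 ⊢; exact G5Proof.main _ k hk t ht h3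
  · rw [G5Proof.S4_eq] at h3 ⊢; exact G5Proof.main _ k hk t ht h3
end
end
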